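/- Let X be a Tychonoff separably λ-submetrizable space and λ ∈ Ψ. Then C_λ(X) is H-separable if and only if for each sequence (𝒰_n : n ∈ ℕ) of λ-f-covers of X there is a sequence (𝒱_n : n ∈ ℕ) of finite sets such that 𝒱_n ⊆ 𝒰_n for each n, and each F ∈ λ is contained in an element of 𝒱_n for all but finitely many n ∈ ℕ. -/

import Mathlib

open Set Filter Topology TopologicalSpace ContinuousMap

/-- A subset `A` of `X` is *C-compact* if `f '' A` is compact in `ℝ` for every
continuous real-valued function `f` on `X`. -/
def IsCCompact {X : Type*} [TopologicalSpace X] (A : Set X) : Prop :=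
  ∀ f : C(X, ℝ), IsCompact (f '' A)

/-- The `λ`-open (set-open) topology on `C(X, ℝ)`, generated by the subbasic sets
`[F, U] = {f : f '' F ⊆ U}` for `F ∈ lam` and `U ⊆ ℝ` open. -/
def setOpenTopology {X : Type*} [TopologicalSpace X] (lam : Set (Set X)) :
    TopologicalSpace C(X, ℝ) :=
  TopologicalSpace.generateFrom
    {S | ∃ F ∈ lam, ∃ U : Set ℝ, IsOpen U ∧ S = {f : C(X, ℝ) | f '' F ⊆ U}}

/-- Membership in the collection `Ψ`: a family of nonempty closed C-compact subsets of `X`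
forming a π-network, hereditary with respect to (closed) C-compact subsets of its elements,
and maximal among families of nonempty sets inducing the same set-open topology. -/
structure MemPsi {X : Type*} [TopologicalSpace X] (lam : Set (Set X)) : Prop where
  nonempty : ∀ A ∈ lam, A.Nonempty
  closed : ∀ A ∈ lam, IsClosed A
  ccompact : ∀ A ∈ lam, IsCCompact A
  piNetwork : ∀ U : Set X, IsOpen U → U.Nonempty → ∃ A ∈ lam, A ⊆ U
  hereditary : ∀ A ∈ lam, ∀ B : Set X, B ⊆ A → B.Nonempty → IsClosed B → IsCCompact B →
    B ∈ lam
  maximal : ∀ lam' : Set (Set X), (∀ A ∈ lam', A.Nonempty) →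
    setOpenTopology lam' = setOpenTopology lam → lam' ⊆ lam

/-- A cozero (functional open) subset of `X`: the complement of a zero-set. -/
def IsCozero {X : Type*} [TopologicalSpace X] (U : Set X) : Prop :=
  ∃ f : C(X, ℝ), U = {x | f x ≠ 0}

/-- `𝒰` is a `λ`-f-cover: a family of cozero sets, not containing `X`, such that every
member of `lam` is contained in some member of `𝒰`. -/
def IsFCover {X : Type*} [TopologicalSpace X] (lam : Set (Set X)) (𝒰 : Set (Set X)) : Prop :=
  (Set.univ : Set X) ∉ 𝒰 ∧ (∀ U ∈ 𝒰, IsCozero U) ∧ ∀ A ∈ lam, ∃ U ∈ 𝒰, A ⊆ U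

/-- `Λ(λ)`: the collection of all `λ`-f-covers of `X`. -/
def fCovers {X : Type*} [TopologicalSpace X] (lam : Set (Set X)) : Set (Set (Set X)) :=
  {𝒰 | IsFCover lam 𝒰}

/-- The selection principle `S₁(𝒜, ℬ)`. -/
def S1 {α : Type*} (𝒜 ℬ : Set (Set α)) : Prop :=
  ∀ A : ℕ → Set α, (∀ n, A n ∈ 𝒜) →
    ∃ b : ℕ → α, (∀ n, b n ∈ A n) ∧ Set.range b ∈ ℬ

/-- The selection principle `S_fin(𝒜, ℬ)`. -/
def Sfin {α : Type*} (𝒜 ℬ : Set (Set α)) : Prop :=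
  ∀ A : ℕ → Set α, (∀ n, A n ∈ 𝒜) →
    ∃ B : ℕ → Set α, (∀ n, (B n).Finite ∧ B n ⊆ A n) ∧ (⋃ n, B n) ∈ ℬ

/-- `Ω_y` with respect to the topology `t`: sets having `y` in their closure but not
containing `y`. -/
def OmegaPt {Y : Type*} (t : TopologicalSpace Y) (y : Y) : Set (Set Y) :=
  {A | y ∈ @closure Y t A ∧ y ∉ A}

/-- Countable `(t₁, t₂)`-tightness of a bitopological space. -/
def CountableBiTightness {Y : Type*} (t1 t2 : TopologicalSpace Y) : Prop :=
  ∀ A : Set Y, ∀ f ∈ @closure Y t1 A, ∃ B ⊆ A, B.Countable ∧ f ∈ @closure Y t2 B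

/-- `X` is `λ`-`μ`-Lindelöf: every `λ`-f-cover has a countable subfamily which is a
`μ`-f-cover. -/
def LamMuLindelof {X : Type*} [TopologicalSpace X] (lam mu : Set (Set X)) : Prop :=
  ∀ 𝒰 : Set (Set X), IsFCover lam 𝒰 → ∃ 𝒱 ⊆ 𝒰, 𝒱.Countable ∧ IsFCover mu 𝒱

/-- Countable `(t₁, t₂)`-T-tightness: for every uncountable regular cardinal `κ` and every
increasing `κ`-indexed sequence of `t₁`-closed sets, the union is `t₂`-closed. -/
def CountableBiTTightness {Y : Type*} (t1 t2 : TopologicalSpace Y) : Prop :=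
  ∀ κ : Cardinal.{0}, Cardinal.aleph0 < κ → κ.IsRegular →
    ∀ A : κ.ord.ToType → Set Y, Monotone A → (∀ α, @IsClosed Y t1 (A α)) →
      @IsClosed Y t2 (⋃ α, A α)

/-- `X` is separably `λ`-submetrizable: there is a continuous map of `X` onto a separable
metric space which is one-to-one on `⋃ lam`. -/
def SeparablyLamSubmetrizable (X : Type*) [TopologicalSpace X] (lam : Set (Set X)) : Prop :=
  ∃ (Y : Type) (m : MetricSpace Y),
    @SeparableSpace Y m.toPseudoMetricSpace.toUniformSpace.toTopologicalSpace ∧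
    ∃ f : X → Y,
      @Continuous X Y _ m.toPseudoMetricSpace.toUniformSpace.toTopologicalSpace f ∧
      Function.Surjective f ∧ Set.InjOn f (⋃₀ lam)

/-- `R`-separability for a pair of topologies: from every sequence of `t₁`-dense sets one
can pick single points forming a `t₂`-dense set. -/
def RSepBi {Y : Type*} (t1 t2 : TopologicalSpace Y) : Prop :=
  ∀ D : ℕ → Set Y, (∀ n, @Dense Y t1 (D n)) →
    ∃ d : ℕ → Y, (∀ n, d n ∈ D n) ∧ @Dense Y t2 (Set.range d)

/-- `M`-separability for a pair of topologies. -/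
def MSepBi {Y : Type*} (t1 t2 : TopologicalSpace Y) : Prop :=
  ∀ D : ℕ → Set Y, (∀ n, @Dense Y t1 (D n)) →
    ∃ F : ℕ → Set Y, (∀ n, (F n).Finite ∧ F n ⊆ D n) ∧ @Dense Y t2 (⋃ n, F n)

/-- `H`-separability for a pair of topologies. -/
def HSepBi {Y : Type*} (t1 t2 : TopologicalSpace Y) : Prop :=
  ∀ D : ℕ → Set Y, (∀ n, @Dense Y t1 (D n)) →
    ∃ F : ℕ → Set Y, (∀ n, (F n).Finite ∧ F n ⊆ D n) ∧
      ∀ G : Set Y, @IsOpen Y t2 G → G.Nonempty →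
        ∀ᶠ n in Filter.atTop, (G ∩ F n).Nonempty

/-- A countable set `D` is groupable with respect to the topology `t`. -/
def GroupableIn {Y : Type*} (t : TopologicalSpace Y) (D : Set Y) : Prop :=
  ∃ A : ℕ → Set Y, (∀ n, (A n).Finite) ∧ D = ⋃ n, A n ∧
    ∀ G : Set Y, @IsOpen Y t G → G.Nonempty →
      ∀ᶠ n in Filter.atTop, (G ∩ A n).Nonempty

/-- `GN`-separability for a pair of topologies. -/
def GNSepBi {Y : Type*} (t1 t2 : TopologicalSpace Y) : Prop :=
  ∀ D : ℕ → Set Y, (∀ n, @Dense Y t1 (D n)) →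
    ∃ d : ℕ → Y, (∀ n, d n ∈ D n) ∧ @Dense Y t2 (Set.range d) ∧
      GroupableIn t2 (Set.range d)

/-- The `(t₁, t₂)`-Pytkeev property for a bitopological space. -/
def PytkeevBi {Y : Type*} (t1 t2 : TopologicalSpace Y) : Prop :=
  ∀ A : Set Y, ∀ g ∈ @closure Y t1 A, g ∉ A →
    ∃ B : ℕ → Set Y, (∀ n, (B n).Infinite ∧ B n ⊆ A) ∧
      ∀ G ∈ @nhds Y t2 g, ∃ n, B n ⊆ G

/-- A groupable `μ`-f-cover. -/
def GroupableFCover {X : Type*} [TopologicalSpace X] (mu 𝒱 : Set (Set X)) : Prop :=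
  𝒱.Countable ∧ IsFCover mu 𝒱 ∧
    ∃ G : ℕ → Set (Set X), (∀ m, (G m).Finite) ∧
      (Pairwise fun m k => Disjoint (G m) (G k)) ∧ 𝒱 = ⋃ m, G m ∧
      ∀ F ∈ mu, ∀ᶠ m in Filter.atTop, ∃ U ∈ G m, F ⊆ U

/-! A sequence of dense subsets of `C_λ(X)` and a sequence of `λ`-f-covers translate into each other
as follows. Given an f-cover `𝒰`, the functions equal to `1` off some member of `𝒰` are dense, and
such a function lying in `[A, (-∞, 1)]` singles out a member of `𝒰` containing `A`. Conversely, a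
set of functions with `h` in its closure gives the cozero sets on which its members are
`1 / (n + 1)`-close to `h`; this makes every point of `C_λ(X)` weakly Fréchet in the strict sense,
which together with separability gives H-separability. Separability comes from composing with a map
into the Hilbert cube that is injective on the members of `λ`.
-/

section CCompact

variable {X Y : Type*} [TopologicalSpace X]

namespace IsCCompact

variable {A : Set X}

lemma image [TopologicalSpace Y] (hA : IsCCompact A) (φ : C(X, Y)) : IsCCompact (φ '' A) := by
  intro f
  rw [← image_comp]
  exact hA (f.comp φ)

lemma isCompact [MetricSpace Y] [ProperSpace Y] {B : Set Y} (hB : IsCCompact B) :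
    IsCompact B := by
  have compact_dist (p : Y) : IsCompact ((dist · p) '' B) := hB ⟨(dist · p), by fun_prop⟩
  refine Metric.isCompact_of_isClosed_isBounded (isClosed_of_closure_subset fun p hp => ?_) ?_
  · have zero_mem : (0 : ℝ) ∈ (dist · p) '' B := by
      rw [← (compact_dist p).isClosed.closure_eq, ← dist_self p]
      exact image_closure_subset_closure_image (by fun_prop) (mem_image_of_mem (dist · p) hp)
    obtain ⟨b, hb, hbp⟩ := zero_mem
    exact dist_eq_zero.1 hbp ▸ hb
  · rcases B.eq_empty_or_nonempty with rfl | ⟨p, -⟩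
    · exact Bornology.isBounded_empty
    · obtain ⟨r, hr⟩ := (compact_dist p).bddAbove
      exact Metric.isBounded_closedBall.subset fun b hb => hr (mem_image_of_mem _ hb)

variable [MetricSpace Y] [ProperSpace Y]

lemma inter_preimage (hA : IsCCompact A) (g : C(X, Y)) {S : Set Y} (hS : IsClosed S) :
    IsCCompact (A ∩ g ⁻¹' S) := by
  intro f
  have compact_graph : IsCompact (f.prodMk g '' A ∩ Prod.snd ⁻¹' S) :=
    (hA.image _).isCompact.inter_right (hS.preimage continuous_snd)
  convert compact_graph.image continuous_fst using 1
  ext r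
  simp only [mem_image, mem_inter_iff, mem_preimage, Prod.exists, ContinuousMap.prod_eval,
    Prod.mk.injEq]
  grind

/-- On `A`, the relation `φ x ↦ f x` is a function whose graph is compact, hence it is continuous
on the compact set `φ '' A` and extends by Tietze's theorem. -/
lemma exists_factorization (hA : IsCCompact A) {φ : C(X, Y)} (hφ : InjOn φ A) (f : C(X, ℝ)) :
    ∃ g : C(Y, ℝ), ∀ x ∈ A, g (φ x) = f x := by
  let graph : Set (Y × ℝ) := φ.prodMk f '' A
  have : CompactSpace graph := isCompact_iff_compactSpace.1 (hA.image (φ.prodMk f)).isCompact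
  have proj_injective : Function.Injective fun p : graph => p.1.1 := by
    rintro ⟨_, x, hx, rfl⟩ ⟨_, y, hy, rfl⟩ hxy
    obtain rfl : x = y := hφ hx hy hxy
    rfl
  have proj_closedEmbedding : IsClosedEmbedding fun p : graph => p.1.1 :=
    (continuous_fst.comp continuous_subtype_val).isClosedEmbedding proj_injective
  obtain ⟨g, hg⟩ :=
    ContinuousMap.exists_extension' proj_closedEmbedding ⟨fun p => p.1.2, by fun_prop⟩
  exact ⟨g, fun x hx => congrFun hg ⟨_, mem_image_of_mem _ hx⟩⟩

lemma exists_eq_one_eq_zero (hA : IsCCompact A) {U : Set X} (hU : IsCozero U) (hAU : A ⊆ U) :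
    ∃ e : C(X, ℝ), (∀ x ∈ A, e x = 1) ∧ ∀ x ∉ U, e x = 0 := by
  obtain ⟨g, rfl⟩ := hU
  rcases A.eq_empty_or_nonempty with rfl | hne
  · exact ⟨0, by simp, by simp⟩
  obtain ⟨_, ⟨a, ha, rfl⟩, hmin⟩ := (hA |g|).exists_isLeast (hne.image _)
  have hpos : 0 < |g a| := abs_pos.2 (hAU ha)
  refine ⟨⟨fun x => min (|g x| / |g a|) 1, by fun_prop⟩, fun x hx => ?_, fun x hx => ?_⟩
  · exact min_eq_right ((one_le_div hpos).2 (hmin (mem_image_of_mem _ hx)))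
  · have : g x = 0 := not_not.1 hx
    simp [this]

end IsCCompact

lemma isCozero_setOf_lt (f g : C(X, ℝ)) : IsCozero {x | f x < g x} :=
  ⟨(g - f) ⊔ 0, by ext x; simp⟩

end CCompact

section SetOpenTopology

variable {X Y : Type*} [TopologicalSpace X] {lam : Set (Set X)}

lemma isOpen_setOf_image_subset {A : Set X} (hA : A ∈ lam) {U : Set ℝ} (hU : IsOpen U) :
    IsOpen[setOpenTopology lam] {f : C(X, ℝ) | f '' A ⊆ U} :=
  isOpen_generateFrom_of_mem ⟨A, hA, U, hU, rfl⟩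

lemma setOpenTopology_empty : setOpenTopology (∅ : Set (Set X)) = ⊤ :=
  top_unique (le_generateFrom (by simp))

lemma setOpenTopology_insert_union {A B : Set X} (hA : A ∈ lam) (hB : B ∈ lam) :
    setOpenTopology (insert (A ∪ B) lam) = setOpenTopology lam := by
  apply le_antisymm
  · apply generateFrom_anti
    rintro _ ⟨F, hF, U, hU, rfl⟩
    exact ⟨F, mem_insert_of_mem _ hF, U, hU, rfl⟩
  · apply le_generateFrom
    rintro _ ⟨F, rfl | hF, U, hU, rfl⟩
    · simp only [image_union, union_subset_iff]
      exact @IsOpen.inter _ (setOpenTopology lam) _ _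
        (isOpen_setOf_image_subset hA hU) (isOpen_setOf_image_subset hB hU)
    · exact isOpen_setOf_image_subset hF hU

lemma MemPsi.union_mem (hlam : MemPsi lam) {A B : Set X} (hA : A ∈ lam) (hB : B ∈ lam) :
    A ∪ B ∈ lam := by
  refine hlam.maximal _ ?_ (setOpenTopology_insert_union hA hB) (mem_insert _ _)
  rintro _ (rfl | hF)
  · exact (hlam.nonempty A hA).inl
  · exact hlam.nonempty _ hF

/-- A family of C-compact sets, directed by inclusion and closed under nonempty traces of the
closed sets `g ⁻¹' S`, where `S ⊆ ℝ` is closed (these are exactly the zero-sets of `X`). For such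
families the set-open topology is that of uniform convergence on the members. -/
structure IsAdmissibleFamily (lam : Set (Set X)) : Prop where
  isCCompact : ∀ A ∈ lam, IsCCompact A
  directedOn : DirectedOn (· ⊆ ·) lam
  inter_preimage_mem : ∀ A ∈ lam, ∀ (g : C(X, ℝ)) (S : Set ℝ), IsClosed S →
    (A ∩ g ⁻¹' S).Nonempty → A ∩ g ⁻¹' S ∈ lam

lemma MemPsi.isAdmissibleFamily (hlam : MemPsi lam) : IsAdmissibleFamily lam where
  isCCompact := hlam.ccompact
  directedOn A hA B hB := ⟨A ∪ B, hlam.union_mem hA hB, subset_union_left, subset_union_right⟩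
  inter_preimage_mem A hA g _ hS hne :=
    hlam.hereditary A hA _ inter_subset_left hne
      ((hlam.closed A hA).inter (hS.preimage g.continuous))
      ((hlam.ccompact A hA).inter_preimage g hS)

namespace IsAdmissibleFamily

/-- Cover `h '' A` by small balls around `t ⊆ h '' A`; each corresponding piece of `A` is a member
of `lam`, and prescribing the range of `f` on every piece keeps `f` close to `h` on `A`. -/
lemma setOf_dist_lt_mem_nhds (hlam : IsAdmissibleFamily lam) (h : C(X, ℝ)) {A : Set X}
    (hA : A ∈ lam) {ε : ℝ} (hε : 0 < ε) :
    {f : C(X, ℝ) | ∀ x ∈ A, dist (f x) (h x) < ε} ∈ @nhds _ (setOpenTopology lam) h := by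
  obtain ⟨t, htA, htf, hcov⟩ := (hlam.isCCompact A hA h).finite_cover_balls
    (show 0 < ε / 4 by positivity)
  let piece (c : ℝ) : Set X := A ∩ h ⁻¹' Metric.closedBall c (ε / 4)
  have piece_mem : ∀ c ∈ t, piece c ∈ lam := by
    intro c hc
    obtain ⟨a, ha, rfl⟩ := htA hc
    exact hlam.inter_preimage_mem A hA h _ Metric.isClosed_closedBall
      ⟨a, ha, Metric.mem_closedBall_self (by positivity)⟩
  have piece_nhds : ∀ c ∈ t, {f : C(X, ℝ) | f '' piece c ⊆ Metric.ball c (ε / 2)} ∈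
      @nhds _ (setOpenTopology lam) h := by
    intro c hc
    let := setOpenTopology lam
    refine (isOpen_setOf_image_subset (piece_mem c hc) Metric.isOpen_ball).mem_nhds ?_
    rintro _ ⟨x, hx, rfl⟩
    exact Metric.closedBall_subset_ball (by linarith) hx.2
  filter_upwards [(biInter_mem htf).2 piece_nhds] with f hf x hx
  obtain ⟨c, hc, hxc⟩ := mem_iUnion₂.1 (hcov (mem_image_of_mem h hx))
  have hfc : dist (f x) c < ε / 2 :=
    mem_iInter₂.1 hf c hc (mem_image_of_mem f ⟨hx, Metric.ball_subset_closedBall hxc⟩)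
  have hhc : dist (h x) c < ε / 4 := hxc
  linarith [dist_triangle_right (f x) (h x) c]

lemma setOpenTopology_eq_induced (hlam : IsAdmissibleFamily lam) :
    setOpenTopology lam =
      induced (fun f : C(X, ℝ) => UniformOnFun.ofFun lam f) inferInstance := by
  apply le_antisymm
  · let := setOpenTopology lam
    refine continuous_iff_le_induced.1 (continuous_iff_continuousAt.2 fun h => ?_)
    refine UniformOnFun.tendsto_iff_tendstoUniformlyOn.2 fun A hA => ?_
    refine Metric.tendstoUniformlyOn_iff.2 fun ε hε => ?_
    filter_upwards [hlam.setOf_dist_lt_mem_nhds h hA hε] with f hf x hx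
    exact dist_comm (f x) (h x) ▸ hf x hx
  · refine le_generateFrom ?_
    rintro _ ⟨A, hA, U, hU, rfl⟩
    let := induced (fun f : C(X, ℝ) => UniformOnFun.ofFun lam f) inferInstance
    refine isOpen_iff_mem_nhds.2 fun h hh => ?_
    obtain ⟨δ, hδ, hsub⟩ := (hlam.isCCompact A hA h).exists_thickening_subset_open hU hh
    have unif := UniformOnFun.tendsto_iff_tendstoUniformlyOn.1
      (continuous_induced_dom.tendsto h) A hA
    filter_upwards [Metric.tendstoUniformlyOn_iff.1 unif δ hδ] with f hf
    rintro _ ⟨x, hx, rfl⟩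
    exact hsub (Metric.mem_thickening_iff.2
      ⟨h x, mem_image_of_mem h hx, dist_comm (h x) (f x) ▸ hf x hx⟩)

lemma hasBasis_nhds (hlam : IsAdmissibleFamily lam) (hne : lam.Nonempty) (h : C(X, ℝ)) :
    (@nhds _ (setOpenTopology lam) h).HasBasis (fun p : Set X × ℝ => p.1 ∈ lam ∧ 0 < p.2)
      fun p => {f | ∀ x ∈ p.1, dist (f x) (h x) < p.2} := by
  rw [hlam.setOpenTopology_eq_induced, nhds_induced]
  exact (UniformOnFun.hasBasis_nhds_of_basis X ℝ lam _ hne hlam.directedOn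
    Metric.uniformity_basis_dist).comap _

lemma denseRange_comp [MetricSpace Y] [ProperSpace Y] (hlam : IsAdmissibleFamily lam)
    (hne : lam.Nonempty) {φ : C(X, Y)} (hφ : ∀ A ∈ lam, InjOn φ A) :
    @DenseRange _ (setOpenTopology lam) _ fun g : C(Y, ℝ) => g.comp φ := by
  intro f
  refine (@mem_closure_iff_nhds_basis _ (setOpenTopology lam) _ _ _ _ _
    (hlam.hasBasis_nhds hne f)).2 ?_
  rintro ⟨A, ε⟩ ⟨hA, hε⟩
  obtain ⟨g, hg⟩ := (hlam.isCCompact A hA).exists_factorization (hφ A hA) f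
  exact ⟨g.comp φ, mem_range_self g, fun x hx => by simpa [hg x hx] using hε⟩

end IsAdmissibleFamily

lemma continuous_comp_setOpenTopology [MetricSpace Y] [ProperSpace Y]
    (hlam : ∀ A ∈ lam, IsCCompact A) (φ : C(X, Y)) :
    @Continuous _ _ _ (setOpenTopology lam) fun g : C(Y, ℝ) => g.comp φ := by
  refine continuous_generateFrom_iff.2 ?_
  rintro _ ⟨A, hA, U, hU, rfl⟩
  have compact_image : IsCompact (φ '' A) := ((hlam A hA).image φ).isCompact
  convert! isOpen_setOfPred_mapsTo compact_image hU using 1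
  ext g
  simp [mapsTo_iff_image_subset, preimage_comp]

lemma SeparablyLamSubmetrizable.exists_injOn_hilbertCube (hsm : SeparablyLamSubmetrizable X lam) :
    ∃ φ : C(X, ℕ → unitInterval), InjOn φ (⋃₀ lam) := by
  obtain ⟨Z, _, _, f, hf, -, hinj⟩ := hsm
  obtain ⟨e, he⟩ := Metric.PiNatEmbed.exists_embedding_to_hilbert_cube (X := Z)
  exact ⟨⟨e ∘ f, he.continuous.comp hf⟩, he.injective.comp_injOn hinj⟩

lemma IsAdmissibleFamily.separableSpace (hlam : IsAdmissibleFamily lam) (hne : lam.Nonempty)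
    (hsm : SeparablyLamSubmetrizable X lam) :
    @SeparableSpace C(X, ℝ) (setOpenTopology lam) := by
  obtain ⟨φ, hφ⟩ := hsm.exists_injOn_hilbertCube
  let := metrizableSpaceMetric (ℕ → unitInterval)
  exact @DenseRange.separableSpace _ _ _ _ (setOpenTopology lam) _
    (hlam.denseRange_comp hne fun A hA => hφ.mono (subset_sUnion_of_mem hA))
    (continuous_comp_setOpenTopology hlam.isCCompact φ)

end SetOpenTopology

section StrictlyWeaklyFrechet

variable {Y : Type*}

/-- The space with topology `t` is weakly Fréchet in the strict sense (Sakai) at the point `y`: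
from every sequence of sets having `y` in their closures one can pick finite subsets such that each
neighbourhood of `y` meets all but finitely many of them. The topology is explicit, as in
`HSepBi`. -/
def StrictlyWeaklyFrechetAt (t : TopologicalSpace Y) (y : Y) : Prop :=
  ∀ D : ℕ → Set Y, (∀ n, y ∈ @closure Y t (D n)) →
    ∃ F : ℕ → Set Y, (∀ n, (F n).Finite ∧ F n ⊆ D n) ∧
      ∀ U ∈ @nhds Y t y, ∀ᶠ n in atTop, (U ∩ F n).Nonempty

/-- Diagonalization over a countable dense set `{q 0, q 1, …}`: the `n`-th finite set collects the
`n`-th selections for `q 0, …, q n`. -/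
lemma hSepBi_of_strictlyWeaklyFrechetAt [t : TopologicalSpace Y] [SeparableSpace Y] [Nonempty Y]
    (hY : ∀ y, StrictlyWeaklyFrechetAt t y) : HSepBi t t := by
  intro D hD
  choose F hF hFmeets using fun k => hY (denseSeq Y k) D fun n => hD n _
  refine ⟨fun n => ⋃ k ∈ Iic n, F k n, fun n => ⟨?_, ?_⟩, fun G hG hGne => ?_⟩
  · exact (finite_Iic n).biUnion fun k _ => (hF k n).1
  · exact iUnion₂_subset fun k _ => (hF k n).2
  · obtain ⟨k, hk⟩ := (denseRange_denseSeq Y).exists_mem_open hG hGne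
    filter_upwards [hFmeets k G (hG.mem_nhds hk), eventually_ge_atTop k] with n hn hkn
    exact hn.mono (inter_subset_inter_right G (subset_biUnion_of_mem (u := (F · n)) hkn))

lemma hSepBi_top [Nonempty Y] (t : TopologicalSpace Y) : HSepBi t ⊤ := by
  intro D hD
  choose d hd using fun n => @Dense.nonempty _ t _ _ (hD n)
  refine ⟨fun n => {d n}, fun n => ⟨finite_singleton _, singleton_subset_iff.2 (hd n)⟩, ?_⟩
  intro G hG hGne
  obtain rfl : G = univ := ((isOpen_top_iff G).1 hG).resolve_left hGne.ne_empty
  simp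

end StrictlyWeaklyFrechet

section LamHurewicz

variable {X : Type*} [TopologicalSpace X] {lam : Set (Set X)}

/-- The Hurewicz-type selection principle for `λ`-f-covers: from every sequence of `λ`-f-covers one
can pick finite subfamilies such that each member of `lam` is contained in an element of all but
finitely many of them. -/
def LamHurewicz (lam : Set (Set X)) : Prop :=
  ∀ 𝒰 : ℕ → Set (Set X), (∀ n, IsFCover lam (𝒰 n)) →
    ∃ 𝒱 : ℕ → Set (Set X), (∀ n, (𝒱 n).Finite ∧ 𝒱 n ⊆ 𝒰 n) ∧
      ∀ F ∈ lam, ∀ᶠ n in atTop, ∃ V ∈ 𝒱 n, F ⊆ V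

lemma lamHurewicz_empty : LamHurewicz (∅ : Set (Set X)) :=
  fun _ _ => ⟨fun _ => ∅, by simp⟩

/-- Unlike f-covers, the families here may contain `X`; such a family contributes `{X}`, and is
replaced by a genuine f-cover when the selection principle is applied. -/
lemma LamHurewicz.exists_finite_subfamilies (H : LamHurewicz lam) {𝒰 : ℕ → Set (Set X)}
    (hcozero : ∀ n, ∀ U ∈ 𝒰 n, IsCozero U) (hcov : ∀ n, ∀ A ∈ lam, ∃ U ∈ 𝒰 n, A ⊆ U) :
    ∃ 𝒱 : ℕ → Set (Set X), (∀ n, (𝒱 n).Finite ∧ 𝒱 n ⊆ 𝒰 n) ∧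
      ∀ A ∈ lam, ∀ᶠ n in atTop, ∃ V ∈ 𝒱 n, A ⊆ V := by
  classical
  by_cases hall : ∀ n, univ ∈ 𝒰 n
  · exact ⟨fun _ => {univ}, fun n => ⟨finite_singleton _, singleton_subset_iff.2 (hall n)⟩,
      fun A _ => .of_forall fun _ => ⟨univ, rfl, subset_univ A⟩⟩
  obtain ⟨m, hm⟩ := not_forall.1 hall
  have isFCover {n} (hn : univ ∉ 𝒰 n) : IsFCover lam (𝒰 n) := ⟨hn, hcozero n, hcov n⟩
  obtain ⟨𝒱, h𝒱, h𝒱cov⟩ := H (fun n => if univ ∈ 𝒰 n then 𝒰 m else 𝒰 n) fun n => by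
    split_ifs with hn
    exacts [isFCover hm, isFCover hn]
  refine ⟨fun n => if univ ∈ 𝒰 n then {univ} else 𝒱 n, fun n => ?_, fun A hA => ?_⟩
  · by_cases hn : univ ∈ 𝒰 n
    · simp [hn]
    · simpa [hn] using h𝒱 n
  · filter_upwards [h𝒱cov A hA] with n hAn
    by_cases hn : univ ∈ 𝒰 n
    · simp [hn]
    · simpa [hn] using hAn

lemma LamHurewicz.strictlyWeaklyFrechetAt (H : LamHurewicz lam) (hlam : IsAdmissibleFamily lam)
    (hne : lam.Nonempty) (h : C(X, ℝ)) : StrictlyWeaklyFrechetAt (setOpenTopology lam) h := by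
  intro D hD
  have hbasis := hlam.hasBasis_nhds hne h
  let close (n : ℕ) (f : C(X, ℝ)) : Set X := {x | dist (f x) (h x) < 1 / ((n : ℝ) + 1)}
  have close_isCozero : ∀ n, ∀ U ∈ close n '' D n, IsCozero U := by
    rintro n _ ⟨f, -, rfl⟩
    exact isCozero_setOf_lt ⟨fun x => dist (f x) (h x), by fun_prop⟩ (.const X (1 / ((n : ℝ) + 1)))
  have close_covers : ∀ n, ∀ A ∈ lam, ∃ U ∈ close n '' D n, A ⊆ U := by
    intro n A hA
    obtain ⟨f, hfD, hfA⟩ := (@mem_closure_iff_nhds_basis _ (setOpenTopology lam) _ _ _ _ _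
      hbasis).1 (hD n) (A, 1 / ((n : ℝ) + 1)) ⟨hA, Nat.one_div_pos_of_nat⟩
    exact ⟨close n f, mem_image_of_mem _ hfD, hfA⟩
  obtain ⟨𝒱, h𝒱, h𝒱cov⟩ := H.exists_finite_subfamilies close_isCozero close_covers
  choose F hFD hFfin hF𝒱 using fun n =>
    exists_subset_image_finite_and.1 ⟨𝒱 n, (h𝒱 n).2, (h𝒱 n).1, rfl⟩
  refine ⟨F, fun n => ⟨hFfin n, hFD n⟩, fun U hU => ?_⟩
  obtain ⟨⟨A, ε⟩, ⟨hA, hε⟩, hball⟩ := hbasis.mem_iff.1 hU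
  filter_upwards [h𝒱cov A hA, tendsto_one_div_add_atTop_nhds_zero_nat.eventually_lt_const hε]
    with n hAn hnε
  obtain ⟨_, hV, hAV⟩ := hAn
  obtain ⟨f, hf, rfl⟩ := hF𝒱 n ▸ hV
  exact ⟨f, hball fun x hx => (hAV hx).trans hnε, hf⟩

lemma IsAdmissibleFamily.dense_setOf_eq_one_off (hlam : IsAdmissibleFamily lam)
    (hne : lam.Nonempty) {𝒰 : Set (Set X)} (h𝒰 : IsFCover lam 𝒰) :
    @Dense _ (setOpenTopology lam) {f : C(X, ℝ) | ∃ U ∈ 𝒰, ∀ x ∉ U, f x = 1} := by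
  intro h
  refine (@mem_closure_iff_nhds_basis _ (setOpenTopology lam) _ _ _ _ _
    (hlam.hasBasis_nhds hne h)).2 ?_
  rintro ⟨A, ε⟩ ⟨hA, hε⟩
  obtain ⟨-, hcozero, hcov⟩ := h𝒰
  obtain ⟨U, hU, hAU⟩ := hcov A hA
  obtain ⟨e, he_one, he_zero⟩ := (hlam.isCCompact A hA).exists_eq_one_eq_zero (hcozero U hU) hAU
  refine ⟨e * h + (1 - e), ⟨U, hU, fun x hx => ?_⟩, fun x hx => ?_⟩
  · simp [he_zero x hx]
  · simpa [he_one x hx] using hε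

lemma HSepBi.lamHurewicz (H : HSepBi (setOpenTopology lam) (setOpenTopology lam))
    (hlam : IsAdmissibleFamily lam) (hne : lam.Nonempty) : LamHurewicz lam := by
  intro 𝒰 h𝒰
  obtain ⟨F, hF, hFmeets⟩ := H _ fun n => hlam.dense_setOf_eq_one_off hne (h𝒰 n)
  choose! u hu hu_one using fun n f (hf : f ∈ F n) => (hF n).2 hf
  refine ⟨fun n => u n '' F n, fun n => ⟨(hF n).1.image _, image_subset_iff.2 (hu n)⟩,
    fun A hA => ?_⟩
  have zero_mem : (0 : C(X, ℝ)) ∈ {f : C(X, ℝ) | f '' A ⊆ Iio 1} := by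
    rintro _ ⟨x, -, rfl⟩
    exact one_pos (α := ℝ)
  filter_upwards [hFmeets _ (isOpen_setOf_image_subset hA isOpen_Iio) ⟨0, zero_mem⟩]
    with n ⟨f, hfA, hfF⟩
  refine ⟨u n f, mem_image_of_mem _ hfF, fun x hx => ?_⟩
  by_contra hxu
  exact (hfA (mem_image_of_mem f hx)).ne (hu_one n f hfF x hxu)

end LamHurewicz

theorem hSep_iff_fCover_grouping_single_general {X : Type*} [TopologicalSpace X]
    {lam : Set (Set X)} (hlam : IsAdmissibleFamily lam)
    (hsm : SeparablyLamSubmetrizable X lam) :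
    HSepBi (setOpenTopology lam) (setOpenTopology lam) ↔ LamHurewicz lam := by
  rcases lam.eq_empty_or_nonempty with rfl | hne
  · rw [setOpenTopology_empty]
    exact iff_of_true (hSepBi_top _) lamHurewicz_empty
  · refine ⟨fun H => H.lamHurewicz hlam hne, fun H => ?_⟩
    have := hlam.separableSpace hne hsm
    exact @hSepBi_of_strictlyWeaklyFrechetAt _ (setOpenTopology lam) _ _
      (H.strictlyWeaklyFrechetAt hlam hne)

/-- For a Tychonoff separably `λ`-submetrizable space `X` and `λ ∈ Ψ`:
`C_λ(X)` is H-separable iff for each sequence of `λ`-f-covers of `X` there are finite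
subfamilies such that each `F ∈ λ` is contained in an element of `𝒱_n` for all but finitely
many `n`. -/
theorem hSep_iff_fCover_grouping_single
    {X : Type*} [TopologicalSpace X] [T35Space X]
    (lam : Set (Set X)) (hlam : MemPsi lam)
    (hsm : SeparablyLamSubmetrizable X lam) :
    HSepBi (setOpenTopology lam) (setOpenTopology lam) ↔
      (∀ 𝒰 : ℕ → Set (Set X), (∀ n, IsFCover lam (𝒰 n)) →
        ∃ 𝒱 : ℕ → Set (Set X), (∀ n, (𝒱 n).Finite ∧ 𝒱 n ⊆ 𝒰 n) ∧
          ∀ F ∈ lam, ∀ᶠ n in Filter.atTop, ∃ V ∈ 𝒱 n, F ⊆ V) :=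
  hSep_iff_fCover_grouping_single_general hlam.isAdmissibleFamily hsm
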